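/- arXiv:1010.2296 — 2 statements merged into one kernel-verified Lean document; each statement's English description precedes it below -/
import Mathlib

section
/- Let G be a finite connected simple graph. Then rc(G) ≤ γ_c(G) + pen(G) + 2, where γ_c(G) is the connected domination number of G and pen(G) is the number of pendant vertices of G. -/
open SimpleGraph Set

/-- The predicate that an edge colouring `c` makes `G` rainbow connected: every pair of
vertices is joined by a path no two of whose edges receive the same colour. -/
def RainbowConnectedUnder {V : Type*} (G : SimpleGraph V) (c : Sym2 V → ℕ) : Prop :=
  ∀ u v : V, ∃ p : G.Walk u v, p.IsPath ∧ (p.edges.map c).Nodup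

/-- The rainbow connection number of `G`: the least `n` such that some edge colouring
using colours `< n` makes `G` rainbow connected. -/
noncomputable def rc {V : Type*} (G : SimpleGraph V) : ℕ :=
  sInf {n | ∃ c : Sym2 V → ℕ, (∀ e ∈ G.edgeSet, c e < n) ∧ RainbowConnectedUnder G c}

/-- Degree of a vertex (as the cardinality of its neighbour set). -/
noncomputable def deg {V : Type*} (G : SimpleGraph V) (v : V) : ℕ := (G.neighborSet v).ncard

/-- `D` is a dominating set of `G`. -/
def IsDominatingSet {V : Type*} (G : SimpleGraph V) (D : Set V) : Prop :=
  ∀ v : V, v ∈ D ∨ ∃ u ∈ D, G.Adj u v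

/-- The connected domination number of `G`. -/
noncomputable def connDomNum {V : Type*} (G : SimpleGraph V) : ℕ :=
  sInf {n | ∃ D : Set V, D.ncard = n ∧ IsDominatingSet G D ∧ (G.induce D).Connected}

/-- Distance of a vertex `v` to a set of vertices `D`. -/
noncomputable def distSet {V : Type*} (G : SimpleGraph V) (D : Set V) (v : V) : ℕ :=
  sInf ((fun u => G.dist u v) '' D)

/-- Diameter of `G`. -/
noncomputable def graphDiam {V : Type*} (G : SimpleGraph V) : ℕ :=
  sSup (Set.range fun p : V × V => G.dist p.1 p.2)

/-- Eccentricity of a vertex. -/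
noncomputable def ecc {V : Type*} (G : SimpleGraph V) (v : V) : ℕ :=
  sSup (Set.range fun u => G.dist v u)

/-- Radius of `G`. -/
noncomputable def graphRadius {V : Type*} (G : SimpleGraph V) : ℕ :=
  sInf (Set.range fun v => ecc G v)

/-- `G` is an interval graph: vertices can be assigned nonempty closed real intervals such
that two distinct vertices are adjacent iff their intervals intersect. -/
def IsIntervalGraph {V : Type*} (G : SimpleGraph V) : Prop :=
  ∃ a b : V → ℝ, (∀ v, a v ≤ b v) ∧
    ∀ u v : V, u ≠ v → (G.Adj u v ↔ (Set.Icc (a u) (b u) ∩ Set.Icc (a v) (b v)).Nonempty)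

/-- `G` is a unit interval graph. -/
def IsUnitIntervalGraph {V : Type*} (G : SimpleGraph V) : Prop :=
  ∃ a : V → ℝ,
    ∀ u v : V, u ≠ v →
      (G.Adj u v ↔ (Set.Icc (a u) (a u + 1) ∩ Set.Icc (a v) (a v + 1)).Nonempty)

/-- `G` is a circular arc graph: vertices can be assigned nonempty closed arcs of a circle
(images of closed intervals in `AddCircle 1`) such that two distinct vertices are adjacent
iff their arcs intersect. -/
def IsCircularArcGraph {V : Type*} (G : SimpleGraph V) : Prop :=
  ∃ a b : V → ℝ, (∀ v, a v ≤ b v) ∧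
    ∀ u v : V, u ≠ v → (G.Adj u v ↔
      (((fun x : ℝ => (x : AddCircle (1:ℝ))) '' Set.Icc (a u) (b u)) ∩
        ((fun x : ℝ => (x : AddCircle (1:ℝ))) '' Set.Icc (a v) (b v))).Nonempty)

/-- There is a path from `x` to `y` avoiding the closed neighbourhood of `z`. -/
def HasAvoidingPath {V : Type*} (G : SimpleGraph V) (x y z : V) : Prop :=
  ∃ p : G.Walk x y, p.IsPath ∧ ∀ w ∈ p.support, w ≠ z ∧ ¬ G.Adj z w

/-- `G` is AT-free: it has no asteroidal triple. -/
def IsATFree {V : Type*} (G : SimpleGraph V) : Prop :=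
  ¬ ∃ x y z : V, x ≠ y ∧ y ≠ z ∧ x ≠ z ∧ ¬G.Adj x y ∧ ¬G.Adj y z ∧ ¬G.Adj x z ∧
    HasAvoidingPath G x y z ∧ HasAvoidingPath G y z x ∧ HasAvoidingPath G x z y

/-- `G` is a threshold graph. -/
def IsThresholdGraph {V : Type*} (G : SimpleGraph V) : Prop :=
  ∃ (w : V → ℝ) (t : ℝ), ∀ u v : V, u ≠ v → (G.Adj u v ↔ t ≤ w u + w v)

/-- `G` is a chain graph: bipartite with the neighbourhoods of one side linearly ordered
by inclusion. -/
def IsChainGraph {V : Type*} (G : SimpleGraph V) : Prop :=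
  ∃ A B : Set V, A ∪ B = Set.univ ∧ Disjoint A B ∧
    (∀ u v : V, G.Adj u v → ¬(u ∈ A ∧ v ∈ A) ∧ ¬(u ∈ B ∧ v ∈ B)) ∧
    ∀ a₁ ∈ A, ∀ a₂ ∈ A,
      G.neighborSet a₁ ⊆ G.neighborSet a₂ ∨ G.neighborSet a₂ ⊆ G.neighborSet a₁

/-- `G` is chordal: it has no induced cycle of length greater than 3. -/
def IsChordal {V : Type*} (G : SimpleGraph V) : Prop :=
  ∀ n : ℕ, 4 ≤ n → IsEmpty (SimpleGraph.cycleGraph n ↪g G)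

/-!
Colour a spanning tree of a connected dominating set `D` injectively, spending `|D| - 1` colours,
and use three more for the edges not inside `D`: a colour `some b` (`b : Bool`) on an edge between
`D` and its complement, and `none` on an edge outside `D`. If `D` contains the pendant vertices,
this can be arranged so that each vertex outside `D` reaches `D` in two ways, by an edge coloured
`some b` and by a walk with distinct colours from `{some !b, none}`. Given two vertices, one can
then choose colour-disjoint walks from them to `D` and join the ends in the tree. Adding the pendant
vertices to a minimum connected dominating set costs at most `pen(G)` more colours.
-/

section RainbowReachable

variable {V α : Type*} {G : SimpleGraph V} {c : Sym2 V → α} {S T : Set α} {u v w : V}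

/-- `u` and `v` are joined by a walk whose edges have pairwise distinct colours, all taken from `S`.
Walks compose more easily than paths; `RainbowReachable.exists_isPath` recovers a path. -/
def RainbowReachable (G : SimpleGraph V) (c : Sym2 V → α) (S : Set α) (u v : V) : Prop :=
  ∃ p : G.Walk u v, (p.edges.map c).Nodup ∧ ∀ e ∈ p.edges, c e ∈ S

namespace RainbowReachable

lemma refl (G : SimpleGraph V) (c : Sym2 V → α) (S : Set α) (u : V) :
    RainbowReachable G c S u u :=
  ⟨.nil, by simp, by simp⟩

lemma of_adj (h : G.Adj u v) : RainbowReachable G c {c s(u, v)} u v :=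
  ⟨h.toWalk, by simp, by simp⟩

lemma mono (hST : S ⊆ T) (h : RainbowReachable G c S u v) : RainbowReachable G c T u v :=
  let ⟨p, hp, hpS⟩ := h
  ⟨p, hp, fun e he ↦ hST (hpS e he)⟩

lemma symm (h : RainbowReachable G c S u v) : RainbowReachable G c S v u := by
  obtain ⟨p, hp, hpS⟩ := h
  exact ⟨p.reverse, by simpa using hp, by simpa using hpS⟩

lemma trans (hST : Disjoint S T) (huv : RainbowReachable G c S u v)
    (hvw : RainbowReachable G c T v w) : RainbowReachable G c (S ∪ T) u w := by
  obtain ⟨p, hp, hpS⟩ := huv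
  obtain ⟨q, hq, hqT⟩ := hvw
  refine ⟨p.append q, ?_, ?_⟩
  · rw [Walk.edges_append, List.map_append]
    refine hp.append hq fun a hap haq ↦ ?_
    obtain ⟨e, he, rfl⟩ := List.mem_map.mp hap
    obtain ⟨f, hf, hfe⟩ := List.mem_map.mp haq
    exact hST.notMem_of_mem_left (hpS e he) (hfe ▸ hqT f hf)
  · intro e he
    rw [Walk.edges_append, List.mem_append] at he
    exact he.imp (hpS e) (hqT e)

lemma of_injOn_edgeSet {F : SimpleGraph V} (hFG : F ≤ G) (hc : InjOn c F.edgeSet)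
    (h : F.Reachable u v) : RainbowReachable G c (c '' F.edgeSet) u v := by
  obtain ⟨p, hp⟩ := h.exists_isPath
  refine ⟨p.mapLe hFG, ?_, ?_⟩ <;> rw [Walk.edges_mapLe_eq_edges]
  · exact hp.isTrail.edges_nodup.map_on fun e he f hf hef ↦
      hc (p.edges_subset_edgeSet he) (p.edges_subset_edgeSet hf) hef
  · exact fun e he ↦ mem_image_of_mem c (p.edges_subset_edgeSet he)

lemma exists_isPath (h : RainbowReachable G c S u v) :
    ∃ p : G.Walk u v, p.IsPath ∧ (p.edges.map c).Nodup := by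
  classical
  obtain ⟨p, hp, -⟩ := h
  exact ⟨p.bypass, p.bypass_isPath, hp.sublist (p.edges_bypass_sublist_edges.map c)⟩

end RainbowReachable

lemma rc_le_card [Finite α] (h : ∀ u v, RainbowReachable G c univ u v) : rc G ≤ Nat.card α := by
  let φ := Finite.equivFin α
  refine Nat.sInf_le ⟨Fin.val ∘ φ ∘ c, fun e _ ↦ (φ (c e)).isLt, fun u v ↦ ?_⟩
  obtain ⟨p, hp, hnodup⟩ := (h u v).exists_isPath
  refine ⟨p, hp, ?_⟩
  rw [← Function.comp_assoc, ← List.map_map]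
  exact hnodup.map (Fin.val_injective.comp φ.injective)

/-- `v` is joined to some vertex of `D` by a walk with pairwise distinct colours from `S`. -/
def RainbowReachesSet (G : SimpleGraph V) (c : Sym2 V → α) (S : Set α) (D : Set V) (v : V) : Prop :=
  ∃ d ∈ D, RainbowReachable G c S v d

lemma RainbowReachesSet.rainbowReachable {D : Set V} {B : Set α}
    (hu : RainbowReachesSet G c S D u) (hv : RainbowReachesSet G c T D v)
    (hD : ∀ d ∈ D, ∀ d' ∈ D, RainbowReachable G c B d d')
    (hST : Disjoint S T) (hSB : Disjoint S B) (hTB : Disjoint T B) :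
    RainbowReachable G c (S ∪ (B ∪ T)) u v := by
  obtain ⟨d, hd, hud⟩ := hu
  obtain ⟨d', hd', hvd'⟩ := hv
  exact hud.trans (disjoint_union_right.mpr ⟨hSB, hST⟩) ((hD d hd d' hd').trans hTB.symm hvd'.symm)

end RainbowReachable

section SpanningForests

variable {V : Type*} {D : Set V}

lemma exists_bool_coloring_forall_exists_adj_ne (H : SimpleGraph V) :
    ∃ side : V → Bool, ∀ v w, H.Adj v w → ∃ u, H.Adj v u ∧ side v ≠ side u := by
  obtain ⟨F, hFH, hF, hreach⟩ := H.exists_isAcyclic_reachable_eq_le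
  let C : F.Coloring Bool := F.recolorOfEquiv finTwoEquiv hF.coloringTwo
  refine ⟨C, fun v w hvw ↦ ?_⟩
  obtain ⟨p⟩ : F.Reachable v w := hreach ▸ hvw.reachable
  have hvp : F.Adj v p.snd := p.adj_snd (Walk.not_nil_of_ne hvw.ne)
  exact ⟨p.snd, hFH hvp, C.valid hvp⟩

lemma exists_le_forall_reachable_ncard_edgeSet {G : SimpleGraph V} (hD : D.Finite)
    (hconn : (G.induce D).Connected) :
    ∃ F ≤ G, F.support ⊆ D ∧ (∀ u ∈ D, ∀ v ∈ D, F.Reachable u v) ∧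
      F.edgeSet.Finite ∧ F.edgeSet.ncard + 1 = D.ncard := by
  have : Finite D := hD
  obtain ⟨T, hTG, hT⟩ := hconn.exists_isTree_le
  have hedges : T.spanningCoe.edgeSet = (Function.Embedding.subtype _).sym2Map '' T.edgeSet :=
    T.edgeSet_map _
  refine ⟨T.spanningCoe, ?_, ?_, ?_, ?_, ?_⟩
  · exact (map_monotone _ hTG).trans (G.spanningCoe_induce_le D)
  · rw [support_spanningCoe]
    exact Subtype.coe_image_subset D T.support
  · exact fun u hu v hv ↦
      (hT.connected ⟨u, hu⟩ ⟨v, hv⟩).map (Embedding.spanningCoe T).toHom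
  · exact hedges ▸ toFinite _
  · rw [hedges, ncard_image_of_injective _ (Function.Embedding.injective _)]
    exact (isTree_iff_connected_and_card.mp hT).2

end SpanningForests

section Domination

variable {V : Type*} {G : SimpleGraph V} {D D' : Set V}

lemma IsDominatingSet.mono (hD : IsDominatingSet G D) (h : D ⊆ D') : IsDominatingSet G D' :=
  fun v ↦ (hD v).imp (h ·) fun ⟨u, hu, huv⟩ ↦ ⟨u, h hu, huv⟩

lemma IsDominatingSet.connected_induce_of_subset (hD : IsDominatingSet G D)
    (hconn : (G.induce D).Connected) (h : D ⊆ D') : (G.induce D').Connected := by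
  obtain ⟨x⟩ := hconn.nonempty
  have reach (v : V) (hv : v ∈ D) : (G.induce D').Reachable ⟨x, h x.2⟩ ⟨v, h hv⟩ :=
    (hconn x ⟨v, hv⟩).map (induceHomOfLE G h).toHom
  rw [connected_iff_exists_forall_reachable]
  refine ⟨⟨x, h x.2⟩, fun ⟨v, hv⟩ ↦ ?_⟩
  obtain hvD | ⟨u, hu, huv⟩ := hD v
  · exact reach v hvD
  · exact (reach u hu).trans (Adj.reachable huv)

lemma exists_ncard_eq_connDomNum (hG : G.Connected) :
    ∃ D : Set V, D.ncard = connDomNum G ∧ IsDominatingSet G D ∧ (G.induce D).Connected :=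
  Nat.sInf_mem (s := {n | ∃ D : Set V, D.ncard = n ∧ IsDominatingSet G D ∧ (G.induce D).Connected})
    ⟨_, univ, rfl, fun v ↦ .inl (mem_univ v), (induceUnivIso G).connected_iff.mpr hG⟩

lemma exists_adj_ne_of_deg_ne_one {v u : V} (hv : deg G v ≠ 1) (huv : G.Adj v u) :
    ∃ w, G.Adj v w ∧ w ≠ u := by
  by_contra! honly
  refine hv (ncard_eq_one.mpr ⟨u, ?_⟩)
  exact Set.ext fun w ↦ ⟨honly w, fun hw ↦ hw ▸ huv⟩

/-- A labelling `side` of the ordered pairs `(v, d)` with `v ∉ D`, `d ∈ D` separates the exits of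
`v` if `v` has two neighbours in `D` with different labels, or one of its neighbours outside `D` has
an edge to `D` labelled differently from an edge between `v` and `D`. -/
def SeparatesExits (G : SimpleGraph V) (D : Set V) (side : V → V → Bool) (v : V) : Prop :=
  ∃ d ∈ D, G.Adj v d ∧
    ((∃ d' ∈ D, G.Adj v d' ∧ side v d ≠ side v d') ∨
      ∃ w ∉ D, ∃ d' ∈ D, G.Adj v w ∧ G.Adj w d' ∧ side v d ≠ side w d')

/- A vertex with a neighbour outside `D` gets one label, from a two-colouring of a spanning forest
of `G - D`. Any other vertex has all its neighbours in `D`, at least two of them, and one of these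
is singled out. -/
lemma IsDominatingSet.exists_separatesExits (hdom : IsDominatingSet G D)
    (hpen : ∀ v, deg G v = 1 → v ∈ D) :
    ∃ side : V → V → Bool, ∀ v ∉ D, SeparatesExits G D side v := by
  classical
  have hnbr (v : V) (hv : v ∉ D) : ∃ d ∈ D, G.Adj v d :=
    let ⟨d, hd, hdv⟩ := (hdom v).resolve_left hv
    ⟨d, hd, hdv.symm⟩
  choose! f hfD hf using hnbr
  obtain ⟨C, hC⟩ := exists_bool_coloring_forall_exists_adj_ne (G.induce Dᶜ).spanningCoe
  have hC' (v w : V) (hv : v ∉ D) (hw : w ∉ D) (hvw : G.Adj v w) :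
      ∃ u ∉ D, G.Adj v u ∧ C v ≠ C u := by
    obtain ⟨u, hvu, hne⟩ := hC v w (by simp [hv, hw, hvw])
    simp only [map_adj, comap_adj] at hvu
    obtain ⟨v, u, hvu, rfl, rfl⟩ := hvu
    exact ⟨u, u.2, hvu, hne⟩
  let side (v d : V) : Bool := if ∃ w ∉ D, G.Adj v w then C v else decide (d = f v)
  refine ⟨side, fun v hv ↦ ⟨f v, hfD v hv, hf v hv, ?_⟩⟩
  by_cases hout : ∃ w ∉ D, G.Adj v w
  · obtain ⟨w, hw, hvw⟩ := hout
    obtain ⟨u, hu, hvu, hne⟩ := hC' v w hv hw hvw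
    have hsv : side v (f v) = C v := if_pos ⟨w, hw, hvw⟩
    have hsu : side u (f u) = C u := if_pos ⟨v, hv, hvu.symm⟩
    exact .inr ⟨u, hu, f u, hfD u hu, hvu, hf u hu, by rwa [hsv, hsu]⟩
  · obtain ⟨d, hvd, hne⟩ := exists_adj_ne_of_deg_ne_one (mt (hpen v) hv) (hf v hv)
    have hd : d ∈ D := by_contra fun hd ↦ hout ⟨d, hd, hvd⟩
    exact .inl ⟨d, hd, hvd, by simp [side, if_neg hout, hne]⟩

end Domination

section Colouring

variable {V ι α β γ : Type*} {G : SimpleGraph V} {D : Set V}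

open Classical in
/-- The map `o`, except that every element of `E` receives a value of its own. -/
noncomputable def individualize (E : Set ι) (o : ι → β) (i : ι) : E ⊕ β :=
  if h : i ∈ E then .inl ⟨i, h⟩ else .inr (o i)

lemma individualize_of_mem {E : Set ι} (o : ι → β) {i : ι} (hi : i ∈ E) :
    individualize E o i = .inl ⟨i, hi⟩ :=
  dif_pos hi

lemma individualize_of_notMem {E : Set ι} (o : ι → β) {i : ι} (hi : i ∉ E) :
    individualize E o i = .inr (o i) :=
  dif_neg hi

lemma injOn_individualize (E : Set ι) (o : ι → β) : InjOn (individualize E o) E := by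
  intro i hi j hj hij
  simpa only [individualize_of_mem o hi, individualize_of_mem o hj, Sum.inl.injEq,
    Subtype.mk.injEq] using hij

lemma image_individualize_subset (E : Set ι) (o : ι → β) :
    individualize E o '' E ⊆ range Sum.inl := by
  rintro _ ⟨i, hi, rfl⟩
  exact ⟨⟨i, hi⟩, (individualize_of_mem o hi).symm⟩

open Classical in
/-- The edge colouring that gives an edge between `v ∉ D` and `d ∈ D` the colour
`some (label v d)`. All other edges are coloured `none`, including those inside `D`, whose colour is
immaterial. -/
noncomputable def boundaryColouring (D : Set V) (label : V → V → α) : Sym2 V → Option α :=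
  Sym2.lift ⟨fun v w ↦
    if v ∉ D ∧ w ∈ D then some (label v w) else if w ∉ D ∧ v ∈ D then some (label w v) else none,
    fun v w ↦ by grind⟩

lemma boundaryColouring_of_notMem_of_mem (label : V → V → α) {v d : V} (hv : v ∉ D) (hd : d ∈ D) :
    boundaryColouring D label s(v, d) = some (label v d) := by
  simp [boundaryColouring, hv, hd]

lemma boundaryColouring_of_notMem_of_notMem (label : V → V → α) {v w : V} (hv : v ∉ D)
    (hw : w ∉ D) : boundaryColouring D label s(v, w) = none := by
  simp [boundaryColouring, hv, hw]

/-- `v` reaches `D` by rainbow walks in two colour-disjoint ways: using a single colour `some b`,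
and using only the opposite colour `some !b` and the colour `none`. -/
def HasTwoExits (G : SimpleGraph V) (c : Sym2 V → γ ⊕ Option Bool) (D : Set V) (v : V) : Prop :=
  ∃ b, RainbowReachesSet G c {.inr (some b)} D v ∧
    RainbowReachesSet G c {.inr (some !b), .inr none} D v

lemma hasTwoExits_of_mem (G : SimpleGraph V) (c : Sym2 V → γ ⊕ Option Bool) {v : V} (hv : v ∈ D) :
    HasTwoExits G c D v :=
  ⟨true, ⟨v, hv, .refl ..⟩, ⟨v, hv, .refl ..⟩⟩

lemma SeparatesExits.hasTwoExits {c : Sym2 V → γ ⊕ Option Bool} {side : V → V → Bool} {v : V}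
    (h : SeparatesExits G D side v)
    (hbdry : ∀ v ∉ D, ∀ d ∈ D, c s(v, d) = .inr (some (side v d)))
    (hout : ∀ v ∉ D, ∀ w ∉ D, c s(v, w) = .inr none) (hv : v ∉ D) : HasTwoExits G c D v := by
  have edge {x d : V} (hx : x ∉ D) (hd : d ∈ D) (hxd : G.Adj x d) :
      RainbowReachable G c {.inr (some (side x d))} x d :=
    hbdry x hx d hd ▸ .of_adj hxd
  obtain ⟨d, hd, hvd, hexit⟩ := h
  refine ⟨side v d, ⟨d, hd, edge hv hd hvd⟩, ?_⟩
  obtain ⟨d', hd', hvd', hne⟩ | ⟨w, hw, d', hd', hvw, hwd', hne⟩ := hexit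
  · rw [← Bool.eq_not.mpr hne.symm]
    exact ⟨d', hd', (edge hv hd' hvd').mono (by simp)⟩
  · rw [← Bool.eq_not.mpr hne.symm]
    have hvw' : RainbowReachable G c {.inr none} v w := hout v hv w hw ▸ .of_adj hvw
    exact ⟨d', hd', (hvw'.trans (by simp) (edge hw hd' hwd')).mono (by simp)⟩

lemma rainbowReachable_of_forall_hasTwoExits {c : Sym2 V → γ ⊕ Option Bool}
    (hD : ∀ d ∈ D, ∀ d' ∈ D, RainbowReachable G c (range Sum.inl) d d')
    (hexits : ∀ v, HasTwoExits G c D v) (u v : V) : RainbowReachable G c univ u v := by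
  obtain ⟨b, hu, -⟩ := hexits u
  obtain ⟨b', hv, hv'⟩ := hexits v
  obtain rfl | hb := eq_or_ne b b'
  · exact (hu.rainbowReachable hv' hD (by simp) (by simp) (by simp)).mono (subset_univ _)
  · exact (hu.rainbowReachable hv hD (by simpa using hb) (by simp) (by simp)).mono (subset_univ _)

end Colouring

section Bounds

variable {V : Type*} {G : SimpleGraph V} {D : Set V}

lemma IsDominatingSet.rc_le_ncard_add_two (hdom : IsDominatingSet G D) (hD : D.Finite)
    (hconn : (G.induce D).Connected) (hpen : ∀ v, deg G v = 1 → v ∈ D) :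
    rc G ≤ D.ncard + 2 := by
  obtain ⟨F, hFG, hFD, hreach, hfin, hcard⟩ := exists_le_forall_reachable_ncard_edgeSet hD hconn
  obtain ⟨side, hside⟩ := hdom.exists_separatesExits hpen
  let o := boundaryColouring D side
  let c := individualize F.edgeSet o
  have hc (v : V) (hv : v ∉ D) (w : V) : c s(v, w) = .inr (o s(v, w)) :=
    individualize_of_notMem o fun hvw ↦ hv (hFD ⟨w, hvw⟩)
  have hinner (d : V) (hd : d ∈ D) (d' : V) (hd' : d' ∈ D) :
      RainbowReachable G c (range Sum.inl) d d' :=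
    .mono (image_individualize_subset _ o)
      (.of_injOn_edgeSet hFG (injOn_individualize _ o) (hreach d hd d' hd'))
  have hexits (v : V) : HasTwoExits G c D v := by
    by_cases hv : v ∈ D
    · exact hasTwoExits_of_mem G c hv
    · refine (hside v hv).hasTwoExits (fun x hx d hd ↦ ?_) (fun x hx y hy ↦ ?_) hv <;> rw [hc x hx]
      · exact congrArg _ (boundaryColouring_of_notMem_of_mem side hx hd)
      · exact congrArg _ (boundaryColouring_of_notMem_of_notMem side hx hy)
  have : Finite F.edgeSet := hfin
  calc rc G ≤ Nat.card (F.edgeSet ⊕ Option Bool) :=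
        rc_le_card (rainbowReachable_of_forall_hasTwoExits hinner hexits)
    _ = F.edgeSet.ncard + 3 := by simp [Nat.card_sum]
    _ = D.ncard + 2 := by omega

theorem stmt_2_general (hD : D.Finite) (hdom : IsDominatingSet G D)
    (hconn : (G.induce D).Connected) (hpen : {v : V | deg G v = 1}.Finite) :
    rc G ≤ D.ncard + ({v : V | deg G v = 1}).ncard + 2 := by
  set P := {v : V | deg G v = 1}
  have hDP : D ⊆ D ∪ P := subset_union_left
  calc rc G ≤ (D ∪ P).ncard + 2 :=
        (hdom.mono hDP).rc_le_ncard_add_two (hD.union hpen)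
          (hdom.connected_induce_of_subset hconn hDP) fun _ hv ↦ .inr hv
    _ ≤ D.ncard + P.ncard + 2 := by grw [ncard_union_le D P]

end Bounds

/-- For every finite connected graph `G`,
`rc(G) ≤ γ_c(G) + pen(G) + 2`, where `pen(G)` is the number of pendant vertices. -/
theorem stmt_2 {V : Type*} [Fintype V] (G : SimpleGraph V) (hG : G.Connected) :
    rc G ≤ connDomNum G + ({v : V | deg G v = 1}).ncard + 2 := by
  obtain ⟨D, hcard, hdom, hconn⟩ := exists_ncard_eq_connDomNum hG
  exact hcard ▸ stmt_2_general D.toFinite hdom hconn (toFinite _)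
end

section
/- Let G be a finite connected simple threshold graph with minimum degree δ(G) ≥ 2. Then diam(G) ≤ rc(G) ≤ 3. -/
open SimpleGraph Set

/-!
In a threshold graph a neighbour of `v` may be replaced by any heavier vertex other than `v`. Hence
a heaviest vertex `a` is universal, and so is a heaviest vertex `b` of the rest, since every vertex
has a neighbour besides `a`. Give the edge `s(a, b)` colour `2`, the other edges at `a` colour `0`
and all remaining edges colour `1`: distinct nonadjacent `u` and `v` are joined by the path
`u, a, b, v` with colours `0, 2, 1`. The bound on the diameter holds because a path that is rainbow
in `n` colours has at most `n` edges.
-/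

section RainbowColoring

variable {V : Type*} {G : SimpleGraph V} {n : ℕ}

/-- `G` is rainbow connected by some edge colouring with the colours `0, …, n - 1`. Thus `rc G` is
the least such `n`, or `0` if there is none. Only the colours of edges of `G` are constrained. -/
def HasRainbowColoring (G : SimpleGraph V) (n : ℕ) : Prop :=
  ∃ c : Sym2 V → ℕ, (∀ e ∈ G.edgeSet, c e < n) ∧ RainbowConnectedUnder G c

theorem HasRainbowColoring.rc_le (h : HasRainbowColoring G n) : rc G ≤ n :=
  Nat.sInf_le h

theorem hasRainbowColoring_rc (h : HasRainbowColoring G n) : HasRainbowColoring G (rc G) :=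
  Nat.sInf_mem (s := {m | HasRainbowColoring G m}) ⟨n, h⟩

theorem length_le_of_nodup_map_edges {c : Sym2 V → ℕ} (hc : ∀ e ∈ G.edgeSet, c e < n) {u v : V}
    (p : G.Walk u v) (hp : (p.edges.map c).Nodup) : p.length ≤ n := by
  have hsub : p.edges.map c ⊆ List.range n := by
    intro k hk
    obtain ⟨e, he, rfl⟩ := List.mem_map.1 hk
    exact List.mem_range.2 (hc e (p.edges_subset_edgeSet he))
  simpa using (List.subperm_of_subset hp hsub).length_le

theorem HasRainbowColoring.graphDiam_le (h : HasRainbowColoring G n) : graphDiam G ≤ n := by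
  obtain ⟨c, hc, hrainbow⟩ := h
  refine csSup_le' ?_
  rintro _ ⟨⟨u, v⟩, rfl⟩
  obtain ⟨p, -, hp⟩ := hrainbow u v
  exact (dist_le p).trans (length_le_of_nodup_map_edges hc p hp)

theorem hasRainbowColoring_three_of_isUniversal {a b : V} (hab : a ≠ b) (ha : G.IsUniversal a)
    (hb : G.IsUniversal b) : HasRainbowColoring G 3 := by
  classical
  let c : Sym2 V → ℕ := fun e ↦ if a ∈ e then if b ∈ e then 2 else 0 else 1
  have hc : ∀ e ∈ G.edgeSet, c e < 3 := by
    intro e _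
    dsimp only [c]
    split_ifs <;> decide
  refine ⟨c, hc, fun u v ↦ ?_⟩
  obtain rfl | huv := eq_or_ne u v
  · exact ⟨.nil, by simp, by simp⟩
  by_cases hadj : G.Adj u v
  · exact ⟨hadj.toWalk, by simp [huv], by simp⟩
  have hau : a ≠ u := by rintro rfl; exact hadj (ha huv)
  have hbu : b ≠ u := by rintro rfl; exact hadj (hb huv)
  have hav : a ≠ v := by rintro rfl; exact hadj (ha huv.symm).symm
  have hbv : b ≠ v := by rintro rfl; exact hadj (hb huv.symm).symm
  refine ⟨.cons (ha hau).symm (.cons (ha hab) (.cons (hb hbv) .nil)), ?_, ?_⟩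
  · simp [Walk.isPath_def, hau.symm, hbu.symm, huv, hab, hav, hbv]
  · simp [c, hau, hbu, hav, hab, hab.symm]

end RainbowColoring

namespace IsThresholdGraph

variable {V : Type*} {G : SimpleGraph V}

theorem exists_mem_isUniversal [Nonempty V] (hG : IsThresholdGraph G) {S : Set V}
    (hfin : S.Finite) (hadj : ∀ v, ∃ y ∈ S, G.Adj v y) : ∃ m ∈ S, G.IsUniversal m := by
  obtain ⟨w, t, hw⟩ := hG
  have hne : S.Nonempty := (hadj (Classical.arbitrary V)).imp fun _ ↦ And.left
  obtain ⟨m, hmS, hmax⟩ := S.exists_max_image w hfin hne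
  refine ⟨m, hmS, fun v hmv ↦ (hw m v hmv).2 ?_⟩
  obtain ⟨y, hyS, hvy⟩ := hadj v
  calc
    t ≤ w v + w y := (hw v y hvy.ne).1 hvy
    _ ≤ w v + w m := by gcongr; exact hmax y hyS
    _ = w m + w v := add_comm _ _

theorem exists_ne_isUniversal [Finite V] [Nonempty V] (hG : IsThresholdGraph G)
    (hnbr : ∀ v, (G.neighborSet v).Nontrivial) :
    ∃ a b, a ≠ b ∧ G.IsUniversal a ∧ G.IsUniversal b := by
  obtain ⟨a, -, ha⟩ := hG.exists_mem_isUniversal finite_univ fun v ↦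
    let ⟨y, hvy⟩ := (hnbr v).nonempty
    ⟨y, mem_univ y, hvy⟩
  have hadj_compl : ∀ v, ∃ y ∈ ({a}ᶜ : Set V), G.Adj v y := fun v ↦
    let ⟨y, hvy, hya⟩ := (hnbr v).exists_ne a
    ⟨y, hya, hvy⟩
  obtain ⟨b, hba, hb⟩ := hG.exists_mem_isUniversal (toFinite _) hadj_compl
  exact ⟨a, b, Ne.symm hba, ha, hb⟩

end IsThresholdGraph

/-- For a finite connected threshold graph `G` with minimum degree at
least 2, `diam(G) ≤ rc(G) ≤ 3`. -/
theorem stmt_5 {V : Type*} [Fintype V] (G : SimpleGraph V) (hG : G.Connected)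
    (hth : IsThresholdGraph G) (hδ : ∀ v : V, 2 ≤ deg G v) :
    graphDiam G ≤ rc G ∧ rc G ≤ 3 := by
  have := hG.nonempty
  have hnbr (v : V) : (G.neighborSet v).Nontrivial :=
    (one_lt_ncard_iff_nontrivial_and_finite.1 (hδ v)).1
  obtain ⟨a, b, hab, ha, hb⟩ := hth.exists_ne_isUniversal hnbr
  have h3 : HasRainbowColoring G 3 := hasRainbowColoring_three_of_isUniversal hab ha hb
  exact ⟨(hasRainbowColoring_rc h3).graphDiam_le, h3.rc_le⟩
end
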